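/- arXiv:2512.12933 — 5 statements merged into one kernel-verified Lean document; each statement's English description precedes it below -/
import Mathlib

section
/- Let G be a graph on a finite vertex set V with |V| = n ≥ 4, let u and v be adjacent vertices of G, and let G' be the graph obtained from G by removing the edge uv. Then every 3-element subset of V induces a disconnected subgraph in G exactly when it induces a disconnected subgraph in G' (i.e. Δ₃(G) = Δ₃(G')) if and only if u and v are twins in G. -/
/-!
A connected graph on at least two vertices has no isolated vertex. On three vertices `u`, `v`, `w`
this determines connectivity: if `u` and `v` are adjacent, `w` has to be adjacent to one of them,
and if they are not, `w` has to be adjacent to both. Hence deleting the edge `uv` preserves the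
connectivity of `{u, v, w}` exactly when `w` does not distinguish `u` from `v`, while a triple
missing `u` or `v` does not see the edge at all.
-/

section ConnectedInduce

variable {V : Type*} {G : SimpleGraph V} {s : Set V} {u v w x : V}

lemma connected_induce_of_forall_adj (hx : x ∈ s) (h : ∀ y ∈ s, x ≠ y → G.Adj x y) :
    (G.induce s).Connected :=
  SimpleGraph.Connected.of_isUniversal (v := ⟨x, hx⟩) fun y hy ↦
    h y y.2 (Subtype.coe_ne_coe.2 hy)

lemma exists_mem_adj_of_preconnected_induce (h : (G.induce s).Preconnected) (hs : s.Nontrivial)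
    (hx : x ∈ s) : ∃ y ∈ s, G.Adj x y := by
  have := hs.coe_sort
  obtain ⟨y, hy⟩ := h.exists_adj_of_nontrivial ⟨x, hx⟩
  exact ⟨y, y.2, hy⟩

lemma connected_induce_triple_iff_of_adj (huv : G.Adj u v) :
    (G.induce {u, v, w}).Connected ↔ G.Adj u w ∨ G.Adj v w := by
  constructor
  · intro h
    have hs : ({u, v, w} : Set V).Nontrivial :=
      Set.nontrivial_of_mem_mem_ne (by simp) (by simp) huv.ne
    obtain ⟨y, hy, hwy⟩ :=
      exists_mem_adj_of_preconnected_induce h.preconnected hs (show w ∈ {u, v, w} by simp)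
    rcases hy with rfl | rfl | rfl
    · exact .inl hwy.symm
    · exact .inr hwy.symm
    · exact (G.irrefl hwy).elim
  · rintro (huw | hvw)
    · exact connected_induce_of_forall_adj (x := u) (by simp) (by simp [huv, huw])
    · exact connected_induce_of_forall_adj (x := v) (by simp) (by simp [huv.symm, hvw])

lemma connected_induce_triple_iff_of_not_adj (hne : u ≠ v) (huv : ¬ G.Adj u v) :
    (G.induce {u, v, w}).Connected ↔ G.Adj u w ∧ G.Adj v w := by
  constructor
  · intro h
    have hs : ({u, v, w} : Set V).Nontrivial :=
      Set.nontrivial_of_mem_mem_ne (by simp) (by simp) hne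
    have hu : ∃ y ∈ ({u, v, w} : Set V), G.Adj u y :=
      exists_mem_adj_of_preconnected_induce h.preconnected hs (by simp)
    have hv : ∃ y ∈ ({u, v, w} : Set V), G.Adj v y :=
      exists_mem_adj_of_preconnected_induce h.preconnected hs (by simp)
    exact ⟨by simpa [huv] using hu, by simpa [huv, G.adj_comm v u] using hv⟩
  · rintro ⟨huw, hvw⟩
    exact connected_induce_of_forall_adj (x := w) (by simp) (by simp [huw.symm, hvw.symm])

end ConnectedInduce

section DeleteEdges

variable {V : Type*} {G : SimpleGraph V} {u v w : V}

lemma induce_deleteEdges_eq_of_forall_exists_notMem {s : Set V} {E : Set (Sym2 V)}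
    (h : ∀ e ∈ E, ∃ x ∈ e, x ∉ s) : (G.deleteEdges E).induce s = G.induce s := by
  ext x y
  have hxy : s(x.1, y.1) ∉ E := by
    intro hE
    obtain ⟨z, hz, hzs⟩ := h _ hE
    rcases Sym2.mem_iff.1 hz with rfl | rfl
    · exact hzs x.2
    · exact hzs y.2
  simp [hxy]

lemma connected_induce_triple_iff_deleteEdges_iff (huv : G.Adj u v) (hwu : w ≠ u) (hwv : w ≠ v) :
    ((G.induce {u, v, w}).Connected ↔
        ((G.deleteEdges {s(u, v)}).induce {u, v, w}).Connected) ↔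
      (G.Adj u w ↔ G.Adj v w) := by
  have not_adj : ¬ (G.deleteEdges {s(u, v)}).Adj u v := by simp
  have adj_left : (G.deleteEdges {s(u, v)}).Adj u w ↔ G.Adj u w := by simp [hwu, hwv]
  have adj_right : (G.deleteEdges {s(u, v)}).Adj v w ↔ G.Adj v w := by simp [hwu, hwv]
  rw [connected_induce_triple_iff_of_adj huv,
    connected_induce_triple_iff_of_not_adj huv.ne not_adj, adj_left, adj_right]
  tauto

end DeleteEdges

lemma neighborSet_sdiff_singleton_eq_iff {V : Type*} {G : SimpleGraph V} {u v : V} :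
    G.neighborSet u \ {v} = G.neighborSet v \ {u} ↔
      ∀ w, w ≠ u → w ≠ v → (G.Adj u w ↔ G.Adj v w) := by
  simp only [Set.ext_iff, Set.mem_sdiff, SimpleGraph.mem_neighborSet, Set.mem_singleton_iff]
  refine forall_congr' fun w ↦ ?_
  by_cases hwu : w = u
  · simp [hwu]
  · by_cases hwv : w = v <;> simp [hwu, hwv]

lemma exists_eq_triple_of_card_eq_three {α : Type*} [DecidableEq α] {T : Finset α} {a b : α}
    (hT : T.card = 3) (hab : a ≠ b) (ha : a ∈ T) (hb : b ∈ T) :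
    ∃ c, c ≠ a ∧ c ≠ b ∧ T = {a, b, c} := by
  obtain ⟨c, hc, rfl⟩ : ∃ c ∉ ({a, b} : Finset α), insert c {a, b} = T :=
    Finset.exists_eq_insert_iff.2
      ⟨by simp [Finset.insert_subset_iff, ha, hb], by rw [Finset.card_pair hab, hT]⟩
  simp only [Finset.mem_insert, Finset.mem_singleton, not_or] at hc
  exact ⟨c, hc.1, hc.2, by rw [Finset.insert_comm, Finset.pair_comm c b]⟩

theorem stmt_3_general {V : Type*} (G : SimpleGraph V) {u v : V} (huv : G.Adj u v) :
    (∀ T : Finset V, T.card = 3 →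
        (¬ (G.induce (T : Set V)).Connected ↔
          ¬ ((G.deleteEdges {s(u, v)}).induce (T : Set V)).Connected)) ↔
      G.neighborSet u \ {v} = G.neighborSet v \ {u} := by
  classical
  simp only [neighborSet_sdiff_singleton_eq_iff, not_iff_not]
  constructor
  · intro h w hwu hwv
    have hT := h {u, v, w} (Finset.card_eq_three.2 ⟨u, v, w, huv.ne, hwu.symm, hwv.symm, rfl⟩)
    rw [Finset.coe_insert, Finset.coe_pair] at hT
    exact (connected_induce_triple_iff_deleteEdges_iff huv hwu hwv).1 hT
  · intro h T hT
    by_cases hmem : u ∈ T ∧ v ∈ T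
    · obtain ⟨w, hwu, hwv, rfl⟩ := exists_eq_triple_of_card_eq_three hT huv.ne hmem.1 hmem.2
      rw [Finset.coe_insert, Finset.coe_pair]
      exact (connected_induce_triple_iff_deleteEdges_iff huv hwu hwv).2 (h w hwu hwv)
    · rw [induce_deleteEdges_eq_of_forall_exists_notMem]
      rintro _ rfl
      simpa [imp_iff_not_or] using hmem

/-- Removing an edge `uv` does not change the 3-cut complex iff `u` and `v`
are twins in `G`. -/
theorem stmt_3 {V : Type*} [Fintype V] [DecidableEq V] (G : SimpleGraph V)
    (hn : 4 ≤ Fintype.card V) (u v : V) (hadj : G.Adj u v)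
    (G' : SimpleGraph V) (hG' : G' = G.deleteEdges {s(u, v)}) :
    (∀ T : Finset V, T.card = 3 →
        (¬ (G.induce (T : Set V)).Connected ↔ ¬ (G'.induce (T : Set V)).Connected)) ↔
      G.neighborSet u \ {v} = G.neighborSet v \ {u} := by
  subst hG'
  exact stmt_3_general G hadj
end

section
/- Let G be a finite graph and let A and B be subsets of its vertex set with |A| = |B| = k, such that the induced subgraphs G[A] and G[B] are connected and |A ∩ B| = 1. Then there exist an integer m ≥ 0 and a sequence of vertex subsets A = A₀, A₁, …, A_m = B, each of size k with G[A_i] connected, such that |A_i ∩ A_{i+1}| = k − 1 for every 0 ≤ i < m. -/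
/-!
Let `C ⊆ A ∩ B` be connected, starting from a common vertex of `A` and `B`. While `C ≠ B`, some
vertex `b ∈ B \ C` is adjacent to `C`. If `b ∉ A`, grow `C` to `A` one neighbour at a time: the last
vertex added can be removed from `A` without disconnecting it. Exchanging that vertex for `b` is
a swap after which the two sets share the larger connected set `C ∪ {b}`. Once `C = B`, the sets
coincide since they have the same size.
-/

open Finset

section InducedConnectivity

variable {V : Type*} {G : SimpleGraph V}

theorem exists_adj_of_ssubset_of_preconnected_induce {s t : Set V}
    (hs : (G.induce s).Preconnected) (ht : t.Nonempty) (hts : t ⊂ s) :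
    ∃ d ∈ t, ∃ b ∈ s \ t, G.Adj d b := by
  obtain ⟨u, hut⟩ := ht
  obtain ⟨v, hvs, hvt⟩ := Set.exists_of_ssubset hts
  obtain ⟨p⟩ := hs ⟨u, hts.subset hut⟩ ⟨v, hvs⟩
  obtain ⟨e, -, he₁, he₂⟩ := p.exists_boundary_dart (Subtype.val ⁻¹' t) hut hvt
  exact ⟨e.fst, he₁, e.snd, ⟨e.snd.2, he₂⟩, e.adj⟩

theorem connected_induce_insert {s : Set V} {b d : V} (hs : (G.induce s).Connected)
    (hd : d ∈ s) (hdb : G.Adj d b) : (G.induce (insert b s)).Connected := by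
  rw [← Set.union_singleton]
  exact SimpleGraph.connected_induce_union hs.preconnected .of_subsingleton hd rfl hdb

variable [DecidableEq V]

theorem connected_insert_induction {C S : Finset V} {P : Finset V → Prop}
    (hS : (G.induce (S : Set V)).Connected) (hC : (G.induce (C : Set V)).Connected)
    (hCS : C ⊆ S) (base : P C)
    (insert_adj : ∀ D, C ⊆ D → D ⊂ S → (G.induce (D : Set V)).Connected →
      ∀ d ∈ D, ∀ b ∈ S \ D, G.Adj d b → P D → P (insert b D)) : P S := by
  let Q (D : Finset V) := C ⊆ D ∧ D ⊆ S ∧ (G.induce (D : Set V)).Connected ∧ P D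
  have hfin : {D | Q D}.Finite := S.powerset.finite_toSet.subset fun D hD ↦ mem_powerset.2 hD.2.1
  obtain ⟨D, hD⟩ := hfin.exists_maximal ⟨C, Subset.rfl, hCS, hC, base⟩
  obtain ⟨hCD, hDS, hDc, hPD⟩ := hD.prop
  obtain rfl | hDS := hDS.eq_or_ssubset
  · exact hPD
  obtain ⟨d, hd, b, ⟨hbS, hbD⟩, hdb⟩ := exists_adj_of_ssubset_of_preconnected_induce
    hS.preconnected (Set.nonempty_coe_sort.1 hDc.nonempty) (coe_ssubset.2 hDS)
  have hQ : Q (insert b D) := by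
    refine ⟨hCD.trans (subset_insert b D), insert_subset hbS hDS.subset, ?_,
      insert_adj D hCD hDS hDc d hd b (mem_sdiff.2 ⟨hbS, hbD⟩) hdb hPD⟩
    rw [coe_insert]
    exact connected_induce_insert hDc hd hdb
  exact absurd (hD.le_of_ge hQ (subset_insert b D) (mem_insert_self b D)) hbD

theorem exists_connected_induce_erase_of_ssubset {C S : Finset V}
    (hS : (G.induce (S : Set V)).Connected) (hC : (G.induce (C : Set V)).Connected)
    (hCS : C ⊂ S) :
    ∃ a ∈ S \ C, (G.induce (S.erase a : Set V)).Connected := by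
  suffices S ≠ C → ∃ a ∈ S \ C, (G.induce (S.erase a : Set V)).Connected from this hCS.ne'
  refine connected_insert_induction
    (P := fun D ↦ D ≠ C → ∃ a ∈ D \ C, (G.induce (D.erase a : Set V)).Connected)
    hS hC hCS.subset (fun h ↦ absurd rfl h) fun D hCD _ hDc _ _ b hb _ _ _ ↦ ?_
  have hbD : b ∉ D := (mem_sdiff.1 hb).2
  refine ⟨b, mem_sdiff.2 ⟨mem_insert_self b D, fun hbC ↦ hbD (hCD hbC)⟩, ?_⟩
  rwa [erase_insert hbD]

end InducedConnectivity

/-- The `k`-element vertex sets of `G` that induce a connected subgraph. -/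
abbrev ConnectedFinset {V : Type*} (G : SimpleGraph V) (k : ℕ) :=
  {S : Finset V // #S = k ∧ (G.induce (S : Set V)).Connected}

/-- The graph on the connected `k`-sets of `G` whose edges are the swaps of a single vertex.
Writing the condition as `#(S ∩ T) + 1 = k` avoids truncated subtraction and excludes loops. -/
def connectedSwapGraph {V : Type*} [DecidableEq V] (G : SimpleGraph V) (k : ℕ) :
    SimpleGraph (ConnectedFinset G k) where
  Adj S T := #(S.1 ∩ T.1) + 1 = k
  symm := ⟨fun S T h ↦ by rwa [inter_comm]⟩
  loopless := ⟨fun S h ↦ by rw [inter_self, S.2.1] at h; omega⟩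

namespace connectedSwapGraph

variable {V : Type*} [DecidableEq V] {G : SimpleGraph V} {k : ℕ}

theorem exists_adj_insert_subset {S : ConnectedFinset G k} {C : Finset V} {b d : V}
    (hC : (G.induce (C : Set V)).Connected) (hCS : C ⊂ S.1) (hb : b ∉ S.1) (hd : d ∈ C)
    (hdb : G.Adj d b) :
    ∃ T, (connectedSwapGraph G k).Adj S T ∧ insert b C ⊆ T.1 := by
  obtain ⟨S, hSk, hS⟩ := S
  obtain ⟨a, ha, hSa⟩ := exists_connected_induce_erase_of_ssubset hS hC hCS
  obtain ⟨haS, haC⟩ := mem_sdiff.1 ha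
  have hCSa : C ⊆ S.erase a := subset_erase.2 ⟨hCS.subset, haC⟩
  have hcard : #(S.erase a) + 1 = k := (card_erase_add_one haS).trans hSk
  have hT : (G.induce (insert b (S.erase a) : Finset V)).Connected := by
    rw [coe_insert]
    exact connected_induce_insert hSa (hCSa hd) hdb
  have hTk : #(insert b (S.erase a)) = k := by
    rw [card_insert_of_notMem fun h ↦ hb (mem_of_mem_erase h), hcard]
  refine ⟨⟨insert b (S.erase a), hTk, hT⟩, ?_, insert_subset_insert b hCSa⟩
  change #(S ∩ insert b (S.erase a)) + 1 = k
  rwa [inter_insert_of_notMem hb, inter_eq_right.2 (erase_subset a S)]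

theorem reachable_of_mem {S T : ConnectedFinset G k} {v : V} (hvS : v ∈ S.1) (hvT : v ∈ T.1) :
    (connectedSwapGraph G k).Reachable S T := by
  obtain ⟨U, hSU, hTU⟩ : ∃ U, (connectedSwapGraph G k).Reachable S U ∧ T.1 ⊆ U.1 := by
    refine connected_insert_induction (C := {v})
      (P := fun D ↦ ∃ U, (connectedSwapGraph G k).Reachable S U ∧ D ⊆ U.1)
      T.2.2 ?_ (singleton_subset_iff.2 hvT) ⟨S, .rfl, singleton_subset_iff.2 hvS⟩ ?_
    · rw [coe_singleton, SimpleGraph.induce_singleton_eq_top]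
      exact SimpleGraph.connected_top
    · rintro D - hDT hD d hd b - hdb ⟨U, hSU, hDU⟩
      by_cases hbU : b ∈ U.1
      · exact ⟨U, hSU, insert_subset hbU hDU⟩
      have hDk : #D < #U.1 := (card_lt_card hDT).trans_eq (T.2.1.trans U.2.1.symm)
      have hDU' : D ⊂ U.1 := hDU.ssubset_of_ne (ne_of_apply_ne card hDk.ne)
      obtain ⟨W, hUW, hDW⟩ := exists_adj_insert_subset hD hDU' hbU hd hdb
      exact ⟨W, hSU.trans hUW.reachable, hDW⟩
  obtain rfl : T = U := Subtype.ext (eq_of_subset_of_card_le hTU (U.2.1.trans T.2.1.symm).le)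
  exact hSU

end connectedSwapGraph

theorem stmt_7_general {V : Type*} [DecidableEq V] (G : SimpleGraph V) (k : ℕ)
    (A B : Finset V) (hA : #A = k) (hB : #B = k)
    (hAc : (G.induce (A : Set V)).Connected) (hBc : (G.induce (B : Set V)).Connected)
    (hAB : (A ∩ B).Nonempty) :
    ∃ (m : ℕ) (f : ℕ → Finset V), f 0 = A ∧ f m = B ∧
      (∀ i ≤ m, #(f i) = k ∧ (G.induce (f i : Set V)).Connected) ∧
      (∀ i < m, #(f i ∩ f (i + 1)) = k - 1) := by
  obtain ⟨v, hv⟩ := hAB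
  obtain ⟨hvA, hvB⟩ := mem_inter.1 hv
  obtain ⟨p⟩ : (connectedSwapGraph G k).Reachable ⟨A, hA, hAc⟩ ⟨B, hB, hBc⟩ :=
    connectedSwapGraph.reachable_of_mem hvA hvB
  refine ⟨p.length, fun i ↦ (p.getVert i).1, congrArg Subtype.val p.getVert_zero,
    congrArg Subtype.val p.getVert_length, fun i _ ↦ (p.getVert i).2, fun i hi ↦ ?_⟩
  exact Nat.eq_sub_of_add_eq (p.adj_getVert_succ hi)

/-- Swap-connectivity: two connected `k`-sets meeting in exactly one vertex are
linked by a sequence of connected `k`-sets, consecutive ones sharing `k-1` vertices. -/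
theorem stmt_7 {V : Type*} [Fintype V] [DecidableEq V] (G : SimpleGraph V) (k : ℕ)
    (A B : Finset V) (hA : A.card = k) (hB : B.card = k)
    (hAc : (G.induce (A : Set V)).Connected) (hBc : (G.induce (B : Set V)).Connected)
    (hAB : (A ∩ B).card = 1) :
    ∃ (m : ℕ) (f : ℕ → Finset V), f 0 = A ∧ f m = B ∧
      (∀ i ≤ m, (f i).card = k ∧ (G.induce ((f i : Finset V) : Set V)).Connected) ∧
      (∀ i < m, (f i ∩ f (i + 1)).card = k - 1) :=
  stmt_7_general G k A B hA hB hAc hBc (card_pos.1 (hAB ▸ Nat.one_pos))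
end

section
/- For all integers n and d with n ≥ 5 and 1 ≤ d ≤ n−4, there exists a family 𝓕 of (d+1)-element subsets of V = {1,…,n} such that: (a) no graph G on the vertex set {1,…,n} satisfies 𝓕 = {F ⊆ {1,…,n} : |F| = d+1 and the induced subgraph of G on {1,…,n}∖F is disconnected}, and (b) no graph G on the vertex set {1,…,n+1} satisfies 𝓕 = {F ⊆ {1,…,n+1} : |F| = d+1 and the induced subgraph of G on {1,…,n+1}∖F is disconnected}. -/
/-! Fix `B` with `d + 2` elements and take for `𝓕` the `(d + 1)`-sets not contained in `B`: among
the sets with complementary cardinality, exactly the supersets of `A = Bᶜ` have to be connected.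

On the given vertices, let `c`, `e₁`, `e₂` be three points of `B`. A connected set `R ∋ c` of size
`#A` inside `A ∪ {c}` omits some `a ∈ A`; neither `e₁` nor `e₂` has a neighbour in `R`, as adding
it would give a connected set of size `#A + 1` omitting `a`. So both are adjacent to `a`, and
`{a, e₁, e₂}` grows inside `A ∪ {e₁, e₂}` to a connected set of size `#A + 1` omitting a point
of `A`.

With one extra vertex `v`, every set avoiding `v` of the relevant size is connected. If `u` is a
neighbour of `v` and `s ∈ A` is another vertex, choose such a set that contains `u` and not `s`,
shrink it by one to a connected set through `u`, and add `v`: the result is connected and contains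
`v` but not `s`. -/

namespace CutComplex

open Finset

variable {V W : Type*}

/-- The facets of the cut complex `Δ_k(G)`, where `r = #V - k`: the `r`-subsets of the vertex set
whose complement induces a disconnected subgraph. They are indexed by `r`, their own cardinality,
so that no subtraction is needed. -/
def cutFacets (G : SimpleGraph V) (r : ℕ) : Set (Finset V) :=
  {F | #F = r ∧ ¬ (G.induce (F : Set V)ᶜ).Connected}

/-- The `r`-subsets that are not contained in `B`; for `#B = r + 1` these are the facets of the
complete `(r - 1)`-dimensional complex except those on the boundary of the simplex `B`. -/
def facetsOutside (B : Finset V) (r : ℕ) : Set (Finset V) :=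
  {F | #F = r ∧ ¬ F ⊆ B}

section Connectivity

variable {G : SimpleGraph V} {S T : Finset V} {u v : V}

lemma exists_adj_mem_notMem_of_connected_induce (hS : (G.induce (S : Set V)).Connected) (hu : u ∈ S)
    (huT : u ∈ T) (hv : v ∈ S) (hvT : v ∉ T) :
    ∃ x ∈ S, x ∈ T ∧ ∃ y ∈ S, y ∉ T ∧ G.Adj x y := by
  obtain ⟨p⟩ := hS.preconnected ⟨u, hu⟩ ⟨v, hv⟩
  obtain ⟨e, -, hfst, hsnd⟩ := p.exists_boundary_dart {z | (z : V) ∈ T} huT hvT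
  exact ⟨e.fst, e.fst.2, hfst, e.snd, e.snd.2, hsnd, e.adj⟩

lemma exists_mem_adj_of_connected_induce (hS : (G.induce (S : Set V)).Connected) (hu : u ∈ S)
    (hcard : 1 < #S) : ∃ x ∈ S, G.Adj u x := by
  have : Nontrivial (S : Set V) := (one_lt_card_iff_nontrivial.1 hcard).coe_sort
  obtain ⟨x, hx⟩ := hS.preconnected.exists_adj_of_nontrivial ⟨u, hu⟩
  exact ⟨x, x.2, hx⟩

lemma connected_induce_insert [DecidableEq V] (hS : (G.induce (S : Set V)).Connected) (hu : u ∈ S)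
    (huv : G.Adj u v) : (G.induce (insert v S : Finset V)).Connected := by
  rw [coe_insert, Set.insert_eq, Set.union_comm]
  exact SimpleGraph.connected_induce_union hS.preconnected
    SimpleGraph.Preconnected.of_subsingleton hu rfl huv

lemma exists_connected_induce_between {R : Finset V} (hR : (G.induce (R : Set V)).Connected)
    (hS : (G.induce (S : Set V)).Connected) (hRS : R ⊆ S) {m : ℕ} (hRm : #R ≤ m) (hmS : m ≤ #S) :
    ∃ T, R ⊆ T ∧ T ⊆ S ∧ #T = m ∧ (G.induce (T : Set V)).Connected := by
  classical
  induction m, hRm using Nat.le_induction with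
  | base => exact ⟨R, Subset.rfl, hRS, rfl, hR⟩
  | succ m _ ih =>
    obtain ⟨T, hRT, hTS, rfl, hT⟩ := ih (by lia)
    obtain ⟨⟨u, huR⟩⟩ := hR.nonempty
    obtain ⟨v, hv, hvT⟩ := exists_mem_notMem_of_card_lt_card hmS
    obtain ⟨x, -, hxT, y, hyS, hyT, hxy⟩ :=
      exists_adj_mem_notMem_of_connected_induce hS (hRS huR) (hRT huR) hv hvT
    exact ⟨insert y T, hRT.trans (subset_insert y T), insert_subset hyS hTS,
      card_insert_of_notMem hyT, connected_induce_insert hT hxT hxy⟩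

lemma exists_connected_induce_subset_mem (hS : (G.induce (S : Set V)).Connected) (hu : u ∈ S)
    {m : ℕ} (hm : 1 ≤ m) (hmS : m ≤ #S) :
    ∃ T ⊆ S, u ∈ T ∧ #T = m ∧ (G.induce (T : Set V)).Connected := by
  have hsingleton : (G.induce (({u} : Finset V) : Set V)).Connected := by
    rw [coe_singleton]
    exact SimpleGraph.Connected.of_subsingleton
  obtain ⟨T, huT, hTS, hT⟩ := exists_connected_induce_between hsingleton hS
    (singleton_subset_iff.2 hu) (by simpa using hm) hmS
  exact ⟨T, hTS, singleton_subset_iff.1 huT, hT⟩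

end Connectivity

section Realization

variable {G : SimpleGraph V}

lemma exists_forall_adj_of_forall_superset [DecidableEq V] {A : Finset V} (hA : A.Nonempty) {c : V}
    (hc : c ∉ A) (hAc : (G.induce (insert c A : Finset V)).Connected)
    (hsup : ∀ T : Finset V, #T = #A + 1 → (G.induce (T : Set V)).Connected → A ⊆ T) :
    ∃ a ∈ A, ∀ e ∉ insert c A, (G.induce (insert e A : Finset V)).Connected → G.Adj a e := by
  obtain ⟨R, hRA, hcR, hRcard, hR⟩ := exists_connected_induce_subset_mem hAc (mem_insert_self c A)
    hA.card_pos (card_le_card (subset_insert c A))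
  obtain ⟨a, haA, haR⟩ : ∃ a ∈ A, a ∉ R := not_subset.1 fun hAR ↦
    hc (eq_of_subset_of_card_le hAR hRcard.le ▸ hcR)
  have hinsert : insert a R = insert c A := eq_of_subset_of_card_le
    (insert_subset (mem_insert_of_mem haA) hRA)
    (by rw [card_insert_of_notMem hc, card_insert_of_notMem haR, hRcard])
  refine ⟨a, haA, fun e he hAe ↦ ?_⟩
  have heA : e ∉ A := fun h ↦ he (mem_insert_of_mem h)
  have heR : e ∉ R := fun h ↦ he (hRA h)
  have hnonadj {x : V} (hx : x ∈ R) : ¬ G.Adj x e := fun hxe ↦ by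
    have hAR : A ⊆ insert e R := hsup _ (by rw [card_insert_of_notMem heR, hRcard])
      (connected_induce_insert hR hx hxe)
    exact haR (mem_of_mem_insert_of_ne (hAR haA) (ne_of_mem_of_not_mem haA heA))
  obtain ⟨y, hy, hey⟩ := exists_mem_adj_of_connected_induce hAe (mem_insert_self e A)
    (by rw [card_insert_of_notMem heA]; have := hA.card_pos; lia)
  have hyA : y ∈ A := mem_of_mem_insert_of_ne hy hey.ne'
  obtain rfl | hyR : y = a ∨ y ∈ R := mem_insert.1 (hinsert ▸ mem_insert_of_mem hyA)
  · exact hey.symm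
  · exact absurd hey.symm (hnonadj hyR)

lemma exists_connected_induce_not_superset [DecidableEq V] {A : Finset V} (hA : 2 ≤ #A)
    {c e₁ e₂ : V} (hc : c ∉ A) (he₁ : e₁ ∉ A) (he₂ : e₂ ∉ A) (hce₁ : c ≠ e₁) (hce₂ : c ≠ e₂)
    (he : e₁ ≠ e₂) (hAc : (G.induce (insert c A : Finset V)).Connected)
    (hAe₁ : (G.induce (insert e₁ A : Finset V)).Connected)
    (hAe₂ : (G.induce (insert e₂ A : Finset V)).Connected) :
    ∃ T, #T = #A + 1 ∧ (G.induce (T : Set V)).Connected ∧ ¬ A ⊆ T := by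
  by_contra! hsup
  obtain ⟨a, haA, hadj⟩ :=
    exists_forall_adj_of_forall_superset (card_pos.1 (by lia)) hc hAc hsup
  have hadj₁ : G.Adj a e₁ := hadj e₁ (by simp [hce₁.symm, he₁]) hAe₁
  have hadj₂ : G.Adj a e₂ := hadj e₂ (by simp [hce₂.symm, he₂]) hAe₂
  have htriple : (G.induce (insert e₂ {a, e₁} : Finset V)).Connected := by
    refine connected_induce_insert ?_ (mem_insert_self a {e₁}) hadj₂
    rw [coe_pair]
    exact SimpleGraph.induce_pair_connected_of_adj hadj₁
  have hbig : (G.induce (insert e₂ (insert e₁ A) : Finset V)).Connected :=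
    connected_induce_insert hAe₁ (mem_insert_of_mem haA) hadj₂
  have hbigcard : #(insert e₂ (insert e₁ A)) = #A + 2 := by
    rw [card_insert_of_notMem (by simp [he.symm, he₂]), card_insert_of_notMem he₁]
  obtain ⟨T, htripleT, -, hTcard, hT⟩ := exists_connected_induce_between (m := #A + 1) htriple hbig
    (by grind) (card_le_three.trans (by lia)) (by lia)
  have hbigT : insert e₂ (insert e₁ A) ⊆ T := by grind [hsup T hTcard hT]
  have := card_le_card hbigT
  lia

variable [Fintype V]

lemma exists_connected_induce_mem_notMem {u v s : V} (huv : G.Adj u v) (hsu : s ≠ u) (hsv : s ≠ v)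
    {m : ℕ} (hm : 2 ≤ m) (hmV : m + 2 ≤ Fintype.card V)
    (hconn : ∀ S : Finset V, #S = m → v ∉ S → (G.induce (S : Set V)).Connected) :
    ∃ T, #T = m ∧ v ∈ T ∧ s ∉ T ∧ (G.induce (T : Set V)).Connected := by
  classical
  obtain ⟨S, huS, hS, hScard⟩ : ∃ S, {u} ⊆ S ∧ S ⊆ ({s, v} : Finset V)ᶜ ∧ #S = m :=
    exists_subsuperset_card_eq (by simp [hsu.symm, huv.ne]) (by rw [card_singleton]; lia)
      (by rw [card_compl, card_pair hsv]; lia)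
  have hsS : s ∉ S := fun h ↦ by simpa using hS h
  have hvS : v ∉ S := fun h ↦ by simpa using hS h
  obtain ⟨T, hTS, huT, hTcard, hT⟩ := exists_connected_induce_subset_mem (hconn S hScard hvS)
    (singleton_subset_iff.1 huS) (m := m - 1) (by lia) (by lia)
  exact ⟨insert v T, by rw [card_insert_of_notMem fun h ↦ hvS (hTS h)]; lia, mem_insert_self v T,
    by simpa [hsv] using fun h ↦ hsS (hTS h), connected_induce_insert hT huT huv⟩

lemma compl_mem_cutFacets [DecidableEq V] {T : Finset V} {r : ℕ} :
    Tᶜ ∈ cutFacets G r ↔ #Tᶜ = r ∧ ¬ (G.induce (T : Set V)).Connected := by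
  rw [cutFacets, Set.mem_ofPred_eq, coe_compl, compl_compl]

theorem facetsOutside_ne_cutFacets (G : SimpleGraph V) {B : Finset V} {r : ℕ} (hr : 2 ≤ r)
    (hB : #B = r + 1) (hBV : #B + 2 ≤ Fintype.card V) : facetsOutside B r ≠ cutFacets G r := by
  classical
  intro heq
  obtain ⟨c, hc, e₁, he₁, e₂, he₂, hce₁, hce₂, he⟩ := two_lt_card.1 (show 2 < #B by lia)
  have hconn {b : V} (hb : b ∈ B) : (G.induce (insert b Bᶜ : Finset V)).Connected := by
    have hcompl : (insert b Bᶜ)ᶜ = B.erase b := by simp [compl_insert]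
    have hmem : (insert b Bᶜ)ᶜ ∉ cutFacets G r := by
      rw [hcompl, ← heq]
      exact fun h ↦ h.2 (erase_subset b B)
    by_contra h
    exact hmem (compl_mem_cutFacets.2 ⟨by rw [hcompl, card_erase_of_mem hb]; lia, h⟩)
  obtain ⟨T, hTcard, hT, hBT⟩ := exists_connected_induce_not_superset (A := Bᶜ)
    (by rw [card_compl]; lia) (by simpa using hc) (by simpa using he₁) (by simpa using he₂)
    hce₁ hce₂ he (hconn hc) (hconn he₁) (hconn he₂)
  have hmem : Tᶜ ∈ facetsOutside B r :=
    ⟨by rw [card_compl, hTcard, card_compl]; lia, fun h ↦ hBT (compl_le_iff_compl_le.1 h)⟩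
  exact (compl_mem_cutFacets.1 (heq ▸ hmem)).2 hT

theorem facetsOutside_avoiding_ne_cutFacets (G : SimpleGraph V) {B : Finset V} {v : V}
    (hv : v ∉ B) {r : ℕ} (hr : 2 ≤ r) (hrB : r ≤ #B) (hBV : #B + 3 ≤ Fintype.card V) :
    {F ∈ facetsOutside B r | v ∉ F} ≠ cutFacets G r := by
  classical
  intro heq
  have hconn {S : Finset V} (hScard : #Sᶜ = r) (hS : ¬ (¬ Sᶜ ⊆ B ∧ v ∉ Sᶜ)) :
      (G.induce (S : Set V)).Connected := by
    by_contra h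
    have hmem := heq ▸ compl_mem_cutFacets.2 ⟨hScard, h⟩
    exact hS ⟨hmem.1.2, hmem.2⟩
  obtain ⟨u, hvu⟩ : ∃ u, G.Adj v u := by
    obtain ⟨F, hFB, hF⟩ := exists_subset_card_eq hrB
    obtain ⟨u, -, hvu⟩ := exists_mem_adj_of_connected_induce (S := Fᶜ) (u := v)
      (hconn (by rwa [compl_compl]) (by simp [hFB])) (by simpa using fun h ↦ hv (hFB h))
      (by rw [card_compl]; lia)
    exact ⟨u, hvu⟩
  obtain ⟨s, -, hs⟩ := exists_mem_notMem_of_card_lt_card (s := insert u (insert v B)) (t := univ)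
    (by grind [card_univ])
  simp only [mem_insert, not_or] at hs
  obtain ⟨hsu, hsv, hsB⟩ := hs
  obtain ⟨T, hTcard, hvT, hsT, hT⟩ := exists_connected_induce_mem_notMem hvu.symm hsu hsv
    (m := Fintype.card V - r) (by lia) (by lia)
    (fun S hScard hvS ↦ hconn (by rw [card_compl]; lia) (by simp [hvS]))
  have hmem : Tᶜ ∈ {F ∈ facetsOutside B r | v ∉ F} :=
    ⟨⟨by rw [card_compl]; lia, fun h ↦ hsB (h (by simpa using hsT))⟩, by simpa using hvT⟩
  exact (compl_mem_cutFacets.1 (heq ▸ hmem)).2 hT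

end Realization

section ExtraVertex

variable {f : V ↪ W} {v : W}

lemma image_map_facetsOutside (hf : Set.range f = {v}ᶜ) (B : Finset V) (r : ℕ) :
    (fun F : Finset V ↦ F.map f) '' facetsOutside B r =
      {F ∈ facetsOutside (B.map f) r | v ∉ F} := by
  have hv : v ∉ Set.range f := by simp [hf]
  ext F
  constructor
  · rintro ⟨F, ⟨hFcard, hFB⟩, rfl⟩
    exact ⟨⟨by rwa [card_map], by rwa [map_subset_map]⟩, fun h ↦ hv (coe_map_subset_range f F h)⟩
  · rintro ⟨⟨hFcard, hFB⟩, hvF⟩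
    obtain ⟨F, rfl⟩ : ∃ F' : Finset V, F'.map f = F := by
      refine ⟨F.preimage f f.injective.injOn, ?_⟩
      ext w
      simp only [mem_map, mem_preimage]
      refine ⟨fun ⟨_, hx, hxw⟩ ↦ hxw ▸ hx, fun hw ↦ ?_⟩
      obtain ⟨x, rfl⟩ : w ∈ Set.range f := hf ▸ ne_of_mem_of_not_mem hw hvF
      exact ⟨x, hw, rfl⟩
    exact ⟨F, ⟨by rwa [card_map] at hFcard, by rwa [map_subset_map] at hFB⟩, rfl⟩

theorem image_map_facetsOutside_ne_cutFacets [Fintype W] (hf : Set.range f = {v}ᶜ)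
    (G : SimpleGraph W) {B : Finset V} {r : ℕ} (hr : 2 ≤ r) (hrB : r ≤ #B)
    (hBW : #B + 3 ≤ Fintype.card W) :
    (fun F : Finset V ↦ F.map f) '' facetsOutside B r ≠ cutFacets G r := by
  rw [image_map_facetsOutside hf]
  have hv : v ∉ Set.range f := by simp [hf]
  exact facetsOutside_avoiding_ne_cutFacets G (fun h ↦ hv (coe_map_subset_range f B h)) hr
    (by rwa [card_map]) (by rwa [card_map])

end ExtraVertex

end CutComplex

/-- `m(d,n) ≥ 2` for `n ≥ 5` and `1 ≤ d ≤ n - 4`: there is a family `𝓕` of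
`(d+1)`-subsets of `{1,…,n}` (here `Fin n`) that is not the family of `(d+1)`-subsets
with disconnected complements of any graph on `n` vertices, nor (viewed inside
`{1,…,n+1}`, here `Fin (n+1)`) of any graph on `n+1` vertices. -/
theorem stmt_12 (n d : ℕ) (hn : 5 ≤ n) (hd1 : 1 ≤ d) (hd2 : d ≤ n - 4) :
    ∃ 𝓕 : Set (Finset (Fin n)),
      (∀ F ∈ 𝓕, F.card = d + 1) ∧
      (¬ ∃ G : SimpleGraph (Fin n),
        𝓕 = {F : Finset (Fin n) | F.card = d + 1 ∧
          ¬ (G.induce ((F : Set (Fin n))ᶜ)).Connected}) ∧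
      (¬ ∃ G : SimpleGraph (Fin (n + 1)),
        (fun F : Finset (Fin n) => F.map Fin.castSuccEmb) '' 𝓕 =
          {F : Finset (Fin (n + 1)) | F.card = d + 1 ∧
            ¬ (G.induce ((F : Set (Fin (n + 1)))ᶜ)).Connected}) := by
  obtain ⟨B, -, hB⟩ : ∃ B ⊆ (Finset.univ : Finset (Fin n)), B.card = d + 2 :=
    Finset.exists_subset_card_eq (by rw [Finset.card_fin]; lia)
  refine ⟨CutComplex.facetsOutside B (d + 1), fun F hF ↦ hF.1, ?_, ?_⟩
  · rintro ⟨G, hG⟩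
    exact CutComplex.facetsOutside_ne_cutFacets G (by lia) hB
      (by rw [Fintype.card_fin]; lia) hG
  · rintro ⟨G, hG⟩
    exact CutComplex.image_map_facetsOutside_ne_cutFacets (f := Fin.castSuccEmb)
      (Set.ext fun _ ↦ Fin.exists_castSucc_eq) G (by lia) (by lia)
      (by rw [Fintype.card_fin]; lia) hG
end

section
/- Let G be a graph on a finite vertex set V with |V| = n ≥ 5 and no twins. Let u and v be adjacent vertices of G with N(u) ∪ N(v) = V. Then for every graph H on V such that every 3-element subset of V induces a disconnected subgraph in H exactly when it induces a disconnected subgraph in G (i.e. Δ₃(H) = Δ₃(G)), the vertices u and v are adjacent in H. -/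
/-!
Suppose `uv` is not an edge of `H`. For every other vertex `w`, the triple `{u, v, w}` is connected
in `G`, hence in `H`, and so `w` is adjacent to both `u` and `v` in `H`. Therefore every triple
`{v, x, y}` avoiding `u` is connected in `H`, hence in `G`. If some `x` were not a neighbour of `v`
in `G`, this would make every other vertex a common neighbour of `v` and `x`, and these two would be
twins. So `v`, and by symmetry `u`, is adjacent to all other vertices of `G`; but then `u` and `v`
are twins.
-/

section Twins

variable {V : Type*}

/-- Two distinct vertices are twins if they have the same neighbours, apart from possibly each
other. -/
def AreTwins (G : SimpleGraph V) (u v : V) : Prop :=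
  u ≠ v ∧ G.neighborSet u \ {v} = G.neighborSet v \ {u}

variable {G : SimpleGraph V} {u v : V}

lemma areTwins_of_forall_adj_and_adj (huv : u ≠ v)
    (h : ∀ w, w ≠ u → w ≠ v → G.Adj u w ∧ G.Adj v w) : AreTwins G u v := by
  refine ⟨huv, Set.ext fun w => ⟨?_, ?_⟩⟩
  · rintro ⟨huw : G.Adj u w, hwv : w ≠ v⟩
    exact ⟨(h w huw.ne' hwv).2, huw.ne'⟩
  · rintro ⟨hvw : G.Adj v w, hwu : w ≠ u⟩
    exact ⟨(h w hwu hvw.ne').1, hvw.ne'⟩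

end Twins

section Triples

variable {V : Type*} {G : SimpleGraph V} {a b c : V}

lemma connected_induce_triple_of_adj (hab : G.Adj a b) (hac : G.Adj a c) :
    (G.induce {a, b, c}).Connected := by
  refine SimpleGraph.Connected.of_isUniversal (v := ⟨a, by simp⟩) ?_
  rintro ⟨x, rfl | rfl | rfl⟩ hax
  · exact absurd rfl hax
  · exact hab
  · exact hac

lemma exists_adj_of_preconnected_induce {s : Set V} (h : (G.induce s).Preconnected)
    (hs : s.Nontrivial) (ha : a ∈ s) : ∃ x ∈ s, G.Adj a x := by
  have := hs.coe_sort
  obtain ⟨⟨x, hx⟩, hax⟩ := h.exists_adj_of_nontrivial ⟨a, ha⟩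
  exact ⟨x, hx, hax⟩

lemma adj_and_adj_of_connected_induce_triple (hab : a ≠ b) (hnadj : ¬ G.Adj a b)
    (h : (G.induce {a, b, c}).Connected) : G.Adj a c ∧ G.Adj b c := by
  have hs : ({a, b, c} : Set V).Nontrivial := ⟨a, by simp, b, by simp, hab⟩
  have hnbr {x : V} (hx : x ∈ ({a, b, c} : Set V)) : ∃ y ∈ ({a, b, c} : Set V), G.Adj x y :=
    exists_adj_of_preconnected_induce h.preconnected hs hx
  constructor
  · obtain ⟨y, rfl | rfl | rfl, hay⟩ := hnbr (x := a) (by simp)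
    exacts [absurd hay G.irrefl, absurd hay hnadj, hay]
  · obtain ⟨y, rfl | rfl | rfl, hby⟩ := hnbr (x := b) (by simp)
    exacts [absurd hby.symm hnadj, absurd hby G.irrefl, hby]

end Triples

/-- `Δ₃(H) = Δ₃(G)`, expressed through the complements of the facets so that it makes sense for an
arbitrary vertex type: the same `3`-element sets of vertices induce disconnected subgraphs. -/
def SameThreeCutComplex {V : Type*} (H G : SimpleGraph V) : Prop :=
  ∀ T : Finset V, T.card = 3 →
    (¬ (H.induce (T : Set V)).Connected ↔ ¬ (G.induce (T : Set V)).Connected)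

namespace SameThreeCutComplex

variable {V : Type*} {G H : SimpleGraph V} {u v w : V}

lemma connected_induce_triple_iff (h : SameThreeCutComplex H G) {a b c : V} (hab : a ≠ b)
    (hac : a ≠ c) (hbc : b ≠ c) :
    (H.induce {a, b, c}).Connected ↔ (G.induce {a, b, c}).Connected := by
  classical
  have hT := h {a, b, c} (Finset.card_eq_three.mpr ⟨a, b, c, hab, hac, hbc, rfl⟩)
  have hcoe : (({a, b, c} : Finset V) : Set V) = {a, b, c} := by simp
  rwa [hcoe, not_iff_not] at hT

lemma adj_and_adj_of_not_adj (h : SameThreeCutComplex H G) (hG : G.Adj u v) (hH : ¬ H.Adj u v)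
    (hwu : w ≠ u) (hwv : w ≠ v) (hw : G.Adj u w ∨ G.Adj v w) : H.Adj u w ∧ H.Adj v w := by
  refine adj_and_adj_of_connected_induce_triple hG.ne hH
    ((h.connected_induce_triple_iff hG.ne hwu.symm hwv.symm).mpr ?_)
  rcases hw with huw | hvw
  · exact connected_induce_triple_of_adj hG huw
  · rw [Set.insert_comm]
    exact connected_induce_triple_of_adj hG.symm hvw

lemma isUniversal_of_forall_adj (h : SameThreeCutComplex H G) (htwins : ∀ x, ¬ AreTwins G v x)
    (hdom : ∀ w, G.Adj u w ∨ G.Adj v w) (hH : ∀ w, w ≠ u → w ≠ v → H.Adj v w) :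
    G.IsUniversal v := by
  intro x hvx
  by_contra hnadj
  have huv : G.Adj u v := (hdom v).resolve_right G.irrefl
  have hux : G.Adj u x := (hdom x).resolve_right hnadj
  refine htwins x (areTwins_of_forall_adj_and_adj hvx fun y hyv hyx => ?_)
  by_cases hyu : y = u
  · subst hyu
    exact ⟨huv.symm, hux.symm⟩
  · refine adj_and_adj_of_connected_induce_triple hvx hnadj ?_
    rw [← h.connected_induce_triple_iff hvx hyv.symm hyx.symm]
    exact connected_induce_triple_of_adj (hH x hux.ne' hvx.symm) (hH y hyu hyv)

end SameThreeCutComplex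

theorem stmt_14_general {V : Type*} {G H : SimpleGraph V} {u v : V}
    (htwins : ∀ x y, ¬ AreTwins G x y) (hdom : ∀ w, G.Adj u w ∨ G.Adj v w)
    (h : SameThreeCutComplex H G) : H.Adj u v := by
  by_contra hnadj
  have huv : G.Adj u v := (hdom v).resolve_right G.irrefl
  have hH (w : V) (hwu : w ≠ u) (hwv : w ≠ v) : H.Adj u w ∧ H.Adj v w :=
    h.adj_and_adj_of_not_adj huv hnadj hwu hwv (hdom w)
  have hu : G.IsUniversal u := h.isUniversal_of_forall_adj (htwins u) (fun w => (hdom w).symm)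
    fun w hwv hwu => (hH w hwu hwv).1
  have hv : G.IsUniversal v := h.isUniversal_of_forall_adj (htwins v) hdom
    fun w hwu hwv => (hH w hwu hwv).2
  exact htwins u v (areTwins_of_forall_adj_and_adj huv.ne
    fun w hwu hwv => ⟨hu hwu.symm, hv hwv.symm⟩)

/-- If `G` has no twins and `u ∼ v` with `N(u) ∪ N(v) = V`, then the edge `uv`
is present in every graph with the same 3-cut complex as `G`. -/
theorem stmt_14 {V : Type*} [Fintype V] [DecidableEq V] (G : SimpleGraph V)
    (hn : 5 ≤ Fintype.card V)
    (htwins : ¬ ∃ u v : V, u ≠ v ∧ G.neighborSet u \ {v} = G.neighborSet v \ {u})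
    (u v : V) (hadj : G.Adj u v)
    (hdom : G.neighborSet u ∪ G.neighborSet v = Set.univ) :
    ∀ H : SimpleGraph V,
      (∀ T : Finset V, T.card = 3 →
        (¬ (H.induce (T : Set V)).Connected ↔ ¬ (G.induce (T : Set V)).Connected)) →
      H.Adj u v :=
  fun _ hH =>
    stmt_14_general (fun x y hxy => htwins ⟨x, y, hxy⟩) (Set.eq_univ_iff_forall.mp hdom) hH
end

section
/- There is no graph G on the vertex set {1,2,3,4,5,6} such that for every 2-element subset F of {1,…,6}, the induced subgraph of G on {1,…,6}∖F is disconnected if and only if F ⊆ {1,…,5} and F ∉ {{1,2},{4,5}}. -/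
/-!
Write `x` for the vertex avoided by every facet. Deleting `x` leaves a graph without cut vertices,
and `x` has a neighbour `v`. Grow a connected set `S` containing `v` but not `x` until exactly three
other vertices are left, and let `Q` be the set of these three. At least two of them, say `p` and
`q`, have a neighbour in `S`: a unique one would be a cut vertex. Hence `Q \ {p}` and `Q \ {q}`,
whose complements are `S ∪ {x, p}` and `S ∪ {x, q}`, are not facets. They share the third vertex of
`Q`, whereas the excluded pairs are disjoint.
-/

section ConnectedInduce

variable {V : Type*} {G : SimpleGraph V} {s : Set V}

theorem exists_adj_inter_sdiff_of_connected_induce {t : Set V} (hs : (G.induce s).Connected)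
    (hinter : (s ∩ t).Nonempty) (hdiff : (s \ t).Nonempty) :
    ∃ u ∈ s ∩ t, ∃ w ∈ s \ t, G.Adj u w := by
  obtain ⟨a, has, hat⟩ := hinter
  obtain ⟨b, hbs, hbt⟩ := hdiff
  obtain ⟨walk⟩ := hs.preconnected ⟨a, has⟩ ⟨b, hbs⟩
  obtain ⟨d, -, hfst, hsnd⟩ := walk.exists_boundary_dart (Subtype.val ⁻¹' t) hat hbt
  exact ⟨d.fst, ⟨d.fst.2, hfst⟩, d.snd, ⟨d.snd.2, hsnd⟩, d.adj⟩

theorem connected_induce_insert_of_adj {u w : V} (hs : (G.induce s).Connected) (hu : u ∈ s)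
    (huw : G.Adj u w) : (G.induce (insert w s)).Connected := by
  have hunion : s ∪ {u, w} = insert w s := by
    rw [Set.union_insert, Set.union_singleton, Set.insert_eq_of_mem (Set.mem_insert_of_mem w hu)]
  rw [← hunion]
  exact SimpleGraph.induce_union_connected hs.preconnected
    (SimpleGraph.induce_pair_connected_of_adj huw).preconnected ⟨u, hu, Set.mem_insert u {w}⟩

theorem exists_finset_connected_induce_card_eq {v : V} (hs : (G.induce s).Connected) (hv : v ∈ s)
    {k : ℕ} (hk : (k + 1 : ℕ) ≤ s.encard) :
    ∃ S : Finset V, v ∈ S ∧ (S : Set V) ⊆ s ∧ S.card = k + 1 ∧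
      (G.induce (S : Set V)).Connected := by
  classical
  induction k with
  | zero =>
    refine ⟨{v}, by simp, by simpa using hv, by simp, ?_⟩
    rw [Finset.coe_singleton]
    exact .of_subsingleton
  | succ k ih =>
    obtain ⟨S, hvS, hSs, hcard, hS⟩ := ih (le_trans (by gcongr; simp) hk)
    have hdiff : (s \ S).Nonempty := by
      refine Set.sdiff_nonempty.2 fun hsS => ?_
      have := hk.trans (Set.encard_le_encard hsS)
      rw [Set.encard_coe_eq_coe_finsetCard, hcard, Nat.cast_le] at this
      lia
    obtain ⟨u, ⟨-, hu⟩, w, ⟨hws, hwS⟩, huw⟩ :=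
      exists_adj_inter_sdiff_of_connected_induce hs ⟨v, hv, hvS⟩ hdiff
    refine ⟨insert w S, Finset.mem_insert_of_mem hvS, ?_, ?_, ?_⟩
    · rw [Finset.coe_insert]
      exact Set.insert_subset hws hSs
    · rw [Finset.card_insert_of_notMem hwS, hcard]
    · rw [Finset.coe_insert]
      exact connected_induce_insert_of_adj hS hu huw

end ConnectedInduce

section DeletePairs

variable {V : Type*} [Fintype V] [DecidableEq V] {G : SimpleGraph V} {x : V}

theorem exists_ne_adj_of_forall_connected_induce_compl_pair
    (hconn : ∀ w ≠ x, (G.induce ({w, x}ᶜ : Set V)).Connected) {S : Finset V} (hS : S.Nonempty)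
    (hxS : x ∉ S) (hcard : 2 ≤ (insert x S)ᶜ.card) :
    ∃ p ∈ (insert x S)ᶜ, ∃ q ∈ (insert x S)ᶜ, p ≠ q ∧
      (∃ u ∈ S, G.Adj u p) ∧ ∃ u ∈ S, G.Adj u q := by
  obtain ⟨v, hv⟩ := hS
  have attached_ne : ∀ r ∈ (insert x S)ᶜ, ∃ q ∈ (insert x S)ᶜ, r ≠ q ∧ ∃ u ∈ S, G.Adj u q := by
    intro r hr
    obtain ⟨r', hr', hne⟩ := Finset.exists_mem_ne (Nat.lt_of_succ_le hcard) r
    simp only [Finset.mem_compl, Finset.mem_insert, not_or] at hr hr'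
    obtain ⟨u, ⟨-, hu⟩, q, ⟨hq, hqS⟩, huq⟩ :=
      exists_adj_inter_sdiff_of_connected_induce (t := (S : Set V)) (hconn r hr.1)
        ⟨v, by grind⟩ ⟨r', by grind⟩
    exact ⟨q, by grind [Finset.mem_compl], by grind, u, hu, huq⟩
  obtain ⟨r, hr⟩ := Finset.card_pos.1 (Nat.zero_lt_of_lt hcard)
  obtain ⟨p, hp, -, hSp⟩ := attached_ne r hr
  obtain ⟨q, hq, hpq, hSq⟩ := attached_ne p hp
  exact ⟨p, hp, q, hq, hpq, hSp, hSq⟩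

theorem connected_induce_compl_erase_of_adj {v p u : V} {S : Finset V}
    (hS : (G.induce (S : Set V)).Connected) (hv : v ∈ S) (hxv : G.Adj x v)
    (hu : u ∈ S) (hup : G.Adj u p) :
    (G.induce (((insert x S)ᶜ.erase p : Finset V) : Set V)ᶜ).Connected := by
  have hcompl :
      (((insert x S)ᶜ.erase p : Finset V) : Set V)ᶜ = insert p (insert x (S : Set V)) := by
    rw [← Finset.coe_compl, Finset.compl_erase, compl_compl, Finset.coe_insert, Finset.coe_insert]
  rw [hcompl]
  exact connected_induce_insert_of_adj (connected_induce_insert_of_adj hS hv hxv.symm)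
    (Set.mem_insert_of_mem x hu) hup

theorem exists_card_eq_three_connected_induce_compl_erase (hV : 5 ≤ Fintype.card V)
    (hconn : ∀ w ≠ x, (G.induce ({w, x}ᶜ : Set V)).Connected) {v : V} (hxv : G.Adj x v) :
    ∃ Q : Finset V, Q.card = 3 ∧ x ∉ Q ∧ ∃ p ∈ Q, ∃ q ∈ Q, p ≠ q ∧
      (G.induce ((Q.erase p : Finset V) : Set V)ᶜ).Connected ∧
      (G.induce ((Q.erase q : Finset V) : Set V)ᶜ).Connected := by
  obtain ⟨w, -, hw⟩ : ∃ w ∈ Finset.univ, w ∉ ({x, v} : Finset V) :=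
    Finset.exists_mem_notMem_of_card_lt_card (Finset.card_le_two.trans_lt (by simp; lia))
  simp only [Finset.mem_insert, Finset.mem_singleton, not_or] at hw
  have hsize : ((Fintype.card V - 5 + 1 : ℕ) : ℕ∞) ≤ ({w, x}ᶜ : Set V).encard := by
    rw [← Finset.coe_pair, ← Finset.coe_compl, Set.encard_coe_eq_coe_finsetCard, Finset.card_compl,
      Finset.card_pair hw.1, Nat.cast_le]
    lia
  obtain ⟨S, hvS, hSsub, hScard, hS⟩ :=
    exists_finset_connected_induce_card_eq (hconn w hw.1) (v := v) (by grind [hxv.ne]) hsize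
  have hxS : x ∉ S := fun hx => hSsub hx (by simp)
  have hQcard : (insert x S)ᶜ.card = 3 := by
    rw [Finset.card_compl, Finset.card_insert_of_notMem hxS, hScard]
    lia
  obtain ⟨p, hp, q, hq, hpq, ⟨u, hu, hup⟩, u', hu', huq⟩ :=
    exists_ne_adj_of_forall_connected_induce_compl_pair hconn ⟨v, hvS⟩ hxS (by lia)
  exact ⟨(insert x S)ᶜ, hQcard, by simp, p, hp, q, hq, hpq,
    connected_induce_compl_erase_of_adj hS hvS hxv hu hup,
    connected_induce_compl_erase_of_adj hS hvS hxv hu' huq⟩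

end DeletePairs

theorem not_disjoint_erase_erase {α : Type*} [DecidableEq α] {Q : Finset α} (hQ : 2 < Q.card)
    (p q : α) : ¬ Disjoint (Q.erase p) (Q.erase q) := by
  obtain ⟨r, hr, hrpq⟩ := Finset.exists_mem_notMem_of_card_lt_card
    ((Finset.card_le_two (a := p) (b := q)).trans_lt hQ)
  simp only [Finset.mem_insert, Finset.mem_singleton, not_or] at hrpq
  exact Finset.not_disjoint_iff.2
    ⟨r, Finset.mem_erase.2 ⟨hrpq.1, hr⟩, Finset.mem_erase.2 ⟨hrpq.2, hr⟩⟩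

theorem stmt_19_general {V : Type*} [Fintype V] (hV : 5 ≤ Fintype.card V) (x : V)
    {M : Set (Finset V)} (hM : M.PairwiseDisjoint id) (hne : ∃ F ∈ M, F.card = 2 ∧ x ∉ F) :
    ¬ ∃ G : SimpleGraph V, ∀ F : Finset V, F.card = 2 →
      (¬ (G.induce ((F : Set V)ᶜ)).Connected ↔ x ∉ F ∧ F ∉ M) := by
  classical
  rintro ⟨G, hG⟩
  have hconn : ∀ w ≠ x, (G.induce ({w, x}ᶜ : Set V)).Connected := by
    intro w hw
    rw [← Finset.coe_pair]
    by_contra h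
    exact ((hG {w, x} (Finset.card_pair hw)).1 h).1 (by simp)
  obtain ⟨v, hxv⟩ : ∃ v, G.Adj x v := by
    obtain ⟨F, hFM, hF, hxF⟩ := hne
    have hFconn : (G.induce ((F : Set V)ᶜ)).Connected := by
      by_contra h
      exact ((hG F hF).1 h).2 hFM
    have hFcompl : 1 < Fᶜ.card := by
      rw [Finset.card_compl, hF]
      lia
    have : Nontrivial ((F : Set V)ᶜ : Set V) := by
      rw [← Finset.coe_compl, Set.nontrivial_coe_sort]
      exact Finset.one_lt_card_iff_nontrivial.1 hFcompl
    obtain ⟨v, hxv⟩ := hFconn.preconnected.exists_adj_of_nontrivial ⟨x, hxF⟩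
    exact ⟨v, hxv⟩
  obtain ⟨Q, hQ, hxQ, p, hp, q, hq, hpq, hQp, hQq⟩ :=
    exists_card_eq_three_connected_induce_compl_erase hV hconn hxv
  have erase_mem : ∀ r ∈ Q, (G.induce ((Q.erase r : Finset V) : Set V)ᶜ).Connected →
      Q.erase r ∈ M := by
    intro r hr hQr
    by_contra hrM
    exact (hG (Q.erase r) (by rw [Finset.card_erase_of_mem hr, hQ])).2
      ⟨fun hx => hxQ (Finset.mem_of_mem_erase hx), hrM⟩ hQr
  exact not_disjoint_erase_erase (by lia) p q <|
    hM (erase_mem p hp hQp) (erase_mem q hq hQq) fun h => hpq ((Finset.erase_inj Q hp).1 h)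

/-- There is no graph on 6 vertices whose 4-cut complex is generated by all
2-subsets of the first 5 vertices other than `{1,2}` and `{4,5}` (here the six
vertices are `0,…,5 : Fin 6`, the first five being `0,…,4`). -/
theorem stmt_19 :
    ¬ ∃ G : SimpleGraph (Fin 6),
      ∀ F : Finset (Fin 6), F.card = 2 →
        (¬ (G.induce ((F : Set (Fin 6))ᶜ)).Connected ↔
          (F ⊆ ({0, 1, 2, 3, 4} : Finset (Fin 6)) ∧
            F ≠ ({0, 1} : Finset (Fin 6)) ∧ F ≠ ({3, 4} : Finset (Fin 6)))) := by
  have subset_iff : ∀ F : Finset (Fin 6), F ⊆ {0, 1, 2, 3, 4} ↔ 5 ∉ F := by decide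
  have hM : ({{0, 1}, {3, 4}} : Set (Finset (Fin 6))).PairwiseDisjoint id :=
    (Set.pairwise_pair_of_symm).2 fun _ => by decide
  simpa [subset_iff] using stmt_19_general (by simp) 5 hM ⟨{0, 1}, by simp⟩
end
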